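/- Let X be an extended metric space with bounded geometry. Then the following are equivalent. (1) There exists an invariant mean on ℓ∞(X; ℂ): a linear functional φ : ℓ∞(X; ℂ) → ℂ with φ(1) = 1, with φ(f) a nonnegative real number whenever f takes values in [0, ∞), and such that for every partial translation t : A → B of X and every f ∈ ℓ∞(X; ℂ) vanishing outside B, one has φ(f) = φ(g), where g(x) = f(t(x)) for x ∈ A and g(x) = 0 for x ∉ A. (2) For every ε > 0 and every finite family t₁ : A₁ → B₁, …, t_m : A_m → B_m of partial translations of X, there exists ξ ∈ ℓ²(X; ℂ) with ‖ξ‖ = 1 and Σ_{x ∈ Aᵢ} |ξ(tᵢ(x)) − ξ(x)|² < ε for every i = 1, …, m. -/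

import Mathlib

/-! From almost invariant vectors to a mean: each unit vector `ξ` gives the normal mean
`f ↦ ∑ x, f x * |ξ x|²` (`densityMean`), and if `ξ` is moved by less than `δ` in `ℓ²`-norm by a
partial translation, this mean is invariant under it up to `3 δ ‖f‖`
(`norm_densityMean_sub_le`). Choosing `ξ` for every finite set of partial translations and every
`δ = 1 / (n + 1)`, the limit along an ultrafilter on the directed set of these choices is an
invariant mean (`exists_mean`).

From a mean to almost invariant vectors (Day's convexity argument): for partial translations
`t i : A i → B i`, let `T` send a finitely supported probability density `p` to the family
`y ↦ p (t i y) - p y` on `A i`, in a finite product of `ℓ¹(X)`. If `0` were not in the closure of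
the convex set of all `T p`, Hahn-Banach would give functions `h i ∈ ℓ∞(X)` and `u > 0` with
`∑ i, (f i - g i) > u` pointwise, where `g i = h i` on `A i` and `f i = h i ∘ (t i)⁻¹` on `B i`,
both extended by zero. An invariant mean takes the value `0` on the left side, a contradiction
(`exists_almost_invariant_finsupp`). So some `T p` is small, and `ξ = √p` works since
`(√a - √b)² ≤ |a - b|`. -/

open scoped ENNReal

/-- A partial translation of an extended metric space `X`: a bijection `t : A → B`
between subsets of `X` moving each point a uniformly bounded distance. -/
def IsPartialTranslation {X : Type*} [EMetricSpace X] (t : X → X) (A B : Set X) : Prop :=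
  Set.BijOn t A B ∧ ∃ C : ℝ≥0∞, C < ⊤ ∧ ∀ x ∈ A, edist (t x) x ≤ C

open Filter Topology

/-! ### From almost invariant vectors to an invariant mean -/

lemma hasSum_normSq {X : Type*} (ξ : lp (fun _ : X => ℂ) 2) :
    HasSum (fun x => ‖ξ x‖ ^ 2) (‖ξ‖ ^ 2) := by
  have h := lp.hasSum_norm (p := 2) (by norm_num) ξ
  simpa using h

/-- The expectation of `f` with respect to the density `|ξ|²`, a mean on `ℓ∞(X)` when `‖ξ‖ = 1`.
The series converges absolutely for all `ξ` and `f`, see `summable_norm_densityMean`. -/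
noncomputable def densityMean {X : Type*} (ξ : lp (fun _ : X => ℂ) 2)
    (f : lp (fun _ : X => ℂ) ∞) : ℂ :=
  ∑' x, f x * ((‖ξ x‖ ^ 2 : ℝ) : ℂ)

lemma summable_norm_densityMean {X : Type*} (ξ : lp (fun _ : X => ℂ) 2)
    (f : lp (fun _ : X => ℂ) ∞) :
    Summable fun x => ‖f x * ((‖ξ x‖ ^ 2 : ℝ) : ℂ)‖ := by
  refine Summable.of_nonneg_of_le (fun _ => norm_nonneg _) (fun x => ?_)
    ((hasSum_normSq ξ).summable.mul_left ‖f‖)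
  rw [norm_mul, Complex.norm_real, Real.norm_of_nonneg (by positivity)]
  gcongr
  exact lp.norm_apply_le_norm ENNReal.top_ne_zero f x

lemma norm_densityMean_le {X : Type*} (ξ : lp (fun _ : X => ℂ) 2)
    (f : lp (fun _ : X => ℂ) ∞) : ‖densityMean ξ f‖ ≤ ‖f‖ * ‖ξ‖ ^ 2 := by
  refine tsum_of_norm_bounded ((hasSum_normSq ξ).mul_left ‖f‖) fun x => ?_
  rw [norm_mul, Complex.norm_real, Real.norm_of_nonneg (by positivity)]
  gcongr
  exact lp.norm_apply_le_norm ENNReal.top_ne_zero f x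

lemma densityMean_add {X : Type*} (ξ : lp (fun _ : X => ℂ) 2)
    (f g : lp (fun _ : X => ℂ) ∞) :
    densityMean ξ (f + g) = densityMean ξ f + densityMean ξ g := by
  unfold densityMean
  rw [← (summable_norm_densityMean ξ f).of_norm.tsum_add
    (summable_norm_densityMean ξ g).of_norm]
  simp [add_mul]

lemma densityMean_smul {X : Type*} (ξ : lp (fun _ : X => ℂ) 2) (c : ℂ)
    (f : lp (fun _ : X => ℂ) ∞) :
    densityMean ξ (c • f) = c * densityMean ξ f := by
  unfold densityMean
  rw [← tsum_mul_left]
  simp [mul_assoc]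

lemma densityMean_one {X : Type*} (ξ : lp (fun _ : X => ℂ) 2) (hξ : ‖ξ‖ = 1)
    (f : lp (fun _ : X => ℂ) ∞) (hf : ∀ x, f x = 1) : densityMean ξ f = 1 := by
  unfold densityMean
  simp only [hf, one_mul]
  rw [← Complex.ofReal_tsum, (hasSum_normSq ξ).tsum_eq, hξ]
  simp

lemma densityMean_nonneg {X : Type*} (ξ : lp (fun _ : X => ℂ) 2)
    (f : lp (fun _ : X => ℂ) ∞) (hf : ∀ x, ∃ r : ℝ, 0 ≤ r ∧ f x = r) :
    0 ≤ (densityMean ξ f).re ∧ (densityMean ξ f).im = 0 := by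
  choose r hr hfr using hf
  unfold densityMean
  simp only [hfr, ← Complex.ofReal_mul]
  rw [← Complex.ofReal_tsum]
  exact ⟨by simpa using tsum_nonneg fun x => mul_nonneg (hr x) (by positivity), by simp⟩

lemma tsum_restrict {X : Type*} (S : Set X) (F : X → ℂ) (h : ∀ x ∉ S, F x = 0) :
    ∑' x, F x = ∑' x : S, F x := by
  refine (tsum_subtype_eq_of_support_subset fun x hx => ?_).symm
  by_contra hS
  exact hx (h x hS)

/-- The bound is `||a|² - |b|²| ≤ |a - b| (|a| + |b|)` followed by the weighted
arithmetic-geometric inequality, with weight `δ`. -/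
lemma abs_normSq_sub_le (a b : ℂ) {δ : ℝ} (hδ : 0 < δ) :
    |‖a‖ ^ 2 - ‖b‖ ^ 2| ≤ δ⁻¹ * ‖a - b‖ ^ 2 + δ * (‖a‖ ^ 2 + ‖b‖ ^ 2) := by
  have h1 : |‖a‖ ^ 2 - ‖b‖ ^ 2| ≤ ‖a - b‖ * (‖a‖ + ‖b‖) := by
    rw [sq_sub_sq, abs_mul, mul_comm, abs_of_nonneg (add_nonneg (norm_nonneg a) (norm_nonneg b))]
    gcongr
    exact abs_norm_sub_norm_le a b
  refine h1.trans ?_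
  have h2 : 0 ≤ δ⁻¹ * (2 * ‖a - b‖ - δ * (‖a‖ + ‖b‖)) ^ 2 := by positivity
  have h3 : δ⁻¹ * (2 * ‖a - b‖ - δ * (‖a‖ + ‖b‖)) ^ 2 =
      4 * (δ⁻¹ * ‖a - b‖ ^ 2) - 4 * (‖a - b‖ * (‖a‖ + ‖b‖)) + δ * (‖a‖ + ‖b‖) ^ 2 := by
    field_simp
    ring
  nlinarith [mul_nonneg hδ.le (sq_nonneg (‖a‖ - ‖b‖)), mul_nonneg hδ.le (sq_nonneg (‖a‖)),
    mul_nonneg hδ.le (sq_nonneg (‖b‖))]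

lemma tsum_normSq_comp_le_one {X ι : Type*} (ξ : lp (fun _ : X => ℂ) 2) (hξ : ‖ξ‖ = 1)
    {j : ι → X} (hj : Function.Injective j) : ∑' i, ‖ξ (j i)‖ ^ 2 ≤ 1 := by
  have hS := hasSum_normSq ξ
  rw [hξ, one_pow] at hS
  rw [← hS.tsum_eq]
  exact Summable.tsum_le_tsum_of_inj j hj (fun _ _ => sq_nonneg _) (fun _ => le_rfl)
    (hS.summable.comp_injective hj) hS.summable

/-- A unit vector moved by less than `δ` by the partial bijection `t` gives a mean that is
`t`-invariant up to `3 δ`: after reindexing along `t`, the difference is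
`∑ x ∈ A, f (t x) (|ξ (t x)|² - |ξ x|²)`, and `abs_normSq_sub_le` applies termwise. -/
lemma norm_densityMean_sub_le {X : Type*} (ξ : lp (fun _ : X => ℂ) 2) (hξ : ‖ξ‖ = 1)
    {t : X → X} {A B : Set X} (ht : Set.BijOn t A B) {δ : ℝ} (hδ : 0 < δ)
    (hs : (∑' x : A, ‖ξ (t x) - ξ (x : X)‖ ^ 2) < δ ^ 2)
    (f g : lp (fun _ : X => ℂ) ∞) (hf : ∀ x ∉ B, f x = 0) (hg : ∀ x ∈ A, g x = f (t x))
    (hg0 : ∀ x ∉ A, g x = 0) :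
    ‖densityMean ξ f - densityMean ξ g‖ ≤ ‖f‖ * (3 * δ) := by
  have hS := (hasSum_normSq ξ).summable
  have hinj : Function.Injective fun x : A => t x := fun x y h =>
    Subtype.ext (ht.injOn x.2 y.2 h)
  have s1 : Summable fun x : A => ‖ξ (t x)‖ ^ 2 := hS.comp_injective hinj
  have s2 : Summable fun x : A => ‖ξ (x : X)‖ ^ 2 := hS.comp_injective Subtype.val_injective
  have b1 : ∑' x : A, ‖ξ (t x)‖ ^ 2 ≤ 1 := tsum_normSq_comp_le_one ξ hξ hinj
  have b2 : ∑' x : A, ‖ξ (x : X)‖ ^ 2 ≤ 1 :=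
    tsum_normSq_comp_le_one ξ hξ Subtype.val_injective
  have s3 : Summable fun x : A => ‖ξ (t x) - ξ (x : X)‖ ^ 2 := by
    refine Summable.of_nonneg_of_le (fun _ => by positivity) (fun x => ?_)
      ((s1.add s2).mul_left 2)
    nlinarith [norm_sub_le (ξ (t x)) (ξ (x : X)), norm_nonneg (ξ (t x) - ξ (x : X)),
      sq_nonneg (‖ξ (t x)‖ - ‖ξ (x : X)‖), norm_nonneg (ξ (t x)), norm_nonneg (ξ (x : X))]
  have e1 : densityMean ξ f = ∑' x : A, f (t x) * ((‖ξ (t x)‖ ^ 2 : ℝ) : ℂ) := by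
    unfold densityMean
    rw [tsum_restrict B _ fun x hx => by simp [hf x hx]]
    exact ((ht.equiv t).tsum_eq fun y : B => f y * ((‖ξ (y : X)‖ ^ 2 : ℝ) : ℂ)).symm
  have e2 : densityMean ξ g = ∑' x : A, f (t x) * ((‖ξ (x : X)‖ ^ 2 : ℝ) : ℂ) := by
    unfold densityMean
    rw [tsum_restrict A _ fun x hx => by simp [hg0 x hx]]
    exact tsum_congr fun x => by rw [hg x x.2]
  have m1 : Summable fun x : A => f (t x) * ((‖ξ (t x)‖ ^ 2 : ℝ) : ℂ) :=
    (summable_norm_densityMean ξ f).of_norm.comp_injective hinj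
  have m2 : Summable fun x : A => f (t x) * ((‖ξ (x : X)‖ ^ 2 : ℝ) : ℂ) := by
    refine ((summable_norm_densityMean ξ g).of_norm.comp_injective
      (Subtype.val_injective (p := (· ∈ A)))).congr fun x => ?_
    simp [hg x x.2]
  rw [e1, e2, ← m1.tsum_sub m2]
  have hb := ((s3.hasSum.mul_left δ⁻¹).add ((s1.hasSum.add s2.hasSum).mul_left δ)).mul_left ‖f‖
  refine (tsum_of_norm_bounded hb fun x => ?_).trans ?_
  · rw [← mul_sub, norm_mul, ← Complex.ofReal_sub, Complex.norm_real, Real.norm_eq_abs]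
    gcongr
    · exact lp.norm_apply_le_norm ENNReal.top_ne_zero f (t x)
    · exact abs_normSq_sub_le _ _ hδ
  · gcongr
    have : δ⁻¹ * (∑' x : A, ‖ξ (t x) - ξ (x : X)‖ ^ 2) ≤ δ⁻¹ * δ ^ 2 := by gcongr
    have h4 : δ⁻¹ * δ ^ 2 = δ := by field_simp
    nlinarith

/-- The invariant mean is an ultralimit of the means `densityMean ξ`, over finite sets of partial
translations and tolerances `1 / (n + 1)`. -/
theorem exists_mean {X : Type*} [EMetricSpace X]
    (H : ∀ ε : ℝ, 0 < ε → ∀ (m : ℕ) (t : Fin m → X → X) (A B : Fin m → Set X),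
      (∀ i, IsPartialTranslation (t i) (A i) (B i)) →
      ∃ ξ : lp (fun _ : X => ℂ) 2, ‖ξ‖ = 1 ∧
        ∀ i, (∑' x : (A i), ‖ξ (t i x) - ξ (x : X)‖ ^ 2) < ε) :
    ∃ φ : lp (fun _ : X => ℂ) ∞ →ₗ[ℂ] ℂ,
      (∀ f : lp (fun _ : X => ℂ) ∞, (∀ x, f x = 1) → φ f = 1) ∧
      (∀ f : lp (fun _ : X => ℂ) ∞,
        (∀ x, ∃ r : ℝ, 0 ≤ r ∧ f x = r) → ∃ r : ℝ, 0 ≤ r ∧ φ f = r) ∧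
      (∀ (t : X → X) (A B : Set X), IsPartialTranslation t A B →
        ∀ f g : lp (fun _ : X => ℂ) ∞,
          (∀ x ∉ B, f x = 0) → (∀ x ∈ A, g x = f (t x)) → (∀ x ∉ A, g x = 0) →
          φ f = φ g) := by
  classical
  let P := {p : (X → X) × Set X × Set X // IsPartialTranslation p.1 p.2.1 p.2.2}
  have key : ∀ I : Finset P × ℕ, ∃ ξ : lp (fun _ : X => ℂ) 2, ‖ξ‖ = 1 ∧
      ∀ p ∈ I.1, (∑' x : p.1.2.1, ‖ξ (p.1.1 x) - ξ (x : X)‖ ^ 2) < (1 / ((I.2 : ℝ) + 1)) ^ 2 := by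
    rintro ⟨S, n⟩
    obtain ⟨ξ, h1, h2⟩ := H ((1 / ((n : ℝ) + 1)) ^ 2) (by positivity) S.card
      (fun i => (S.equivFin.symm i).1.1.1) (fun i => (S.equivFin.symm i).1.1.2.1)
      (fun i => (S.equivFin.symm i).1.1.2.2) (fun i => (S.equivFin.symm i).1.2)
    refine ⟨ξ, h1, fun p hp => ?_⟩
    have := h2 (S.equivFin ⟨p, hp⟩)
    rw [Equiv.symm_apply_apply] at this
    exact this
  choose ξ hξ hξt using key
  let U : Ultrafilter (Finset P × ℕ) := Ultrafilter.of atTop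
  have hU : (U : Filter (Finset P × ℕ)) ≤ atTop := Ultrafilter.of_le _
  have lim : ∀ f : lp (fun _ : X => ℂ) ∞, ∃ z : ℂ,
      Tendsto (fun I => densityMean (ξ I) f) U (𝓝 z) := by
    intro f
    obtain ⟨z, -, hz⟩ := (isCompact_closedBall (0 : ℂ) ‖f‖).ultrafilter_le_nhds
      (U.map fun I => densityMean (ξ I) f) (by
        rw [le_principal_iff]
        refine mem_map.2 (Eventually.of_forall fun I => ?_)
        simpa [hξ] using norm_densityMean_le (ξ I) f)
    exact ⟨z, hz⟩
  choose Φ hΦ using lim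
  refine ⟨{ toFun := Φ, map_add' := fun f g => ?_, map_smul' := fun c f => ?_ }, ?_, ?_, ?_⟩
  · refine tendsto_nhds_unique (hΦ (f + g)) ?_
    simpa only [densityMean_add] using (hΦ f).add (hΦ g)
  · refine tendsto_nhds_unique (hΦ (c • f)) ?_
    simpa only [densityMean_smul, smul_eq_mul, RingHom.id_apply] using (hΦ f).const_mul c
  · intro f hf
    refine tendsto_nhds_unique (hΦ f) ?_
    simpa only [densityMean_one _ (hξ _) f hf] using tendsto_const_nhds
  · intro f hf
    have h1 : 0 ≤ (Φ f).re := ge_of_tendsto' ((Complex.continuous_re.tendsto _).comp (hΦ f))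
      fun I => (densityMean_nonneg (ξ I) f hf).1
    have h2 : (Φ f).im = 0 := by
      refine tendsto_nhds_unique ((Complex.continuous_im.tendsto _).comp (hΦ f)) ?_
      refine tendsto_const_nhds.congr fun I => ?_
      exact (densityMean_nonneg (ξ I) f hf).2.symm
    exact ⟨(Φ f).re, h1, Complex.ext (by simp) (by simpa using h2)⟩
  · intro t A B ht f g hf hg hg0
    change Φ f = Φ g
    rw [← sub_eq_zero]
    refine tendsto_nhds_unique ((hΦ f).sub (hΦ g)) ?_
    have hδ : Tendsto (fun I : Finset P × ℕ => ‖f‖ * (3 * (1 / ((I.2 : ℝ) + 1)))) U (𝓝 0) := by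
      have h1 : Tendsto (fun I : Finset P × ℕ => 1 / ((I.2 : ℝ) + 1)) U (𝓝 0) :=
        (tendsto_one_div_add_atTop_nhds_zero_nat (𝕜 := ℝ)).comp
          ((tendsto_snd (f := atTop) (g := atTop)).mono_left (by rw [prod_atTop_atTop_eq]; exact hU))
      simpa using (h1.const_mul 3).const_mul ‖f‖
    refine squeeze_zero_norm' ?_ hδ
    have hev : ∀ᶠ I : Finset P × ℕ in U, (({⟨(t, A, B), ht⟩}, 0) : Finset P × ℕ) ≤ I :=
      hU (eventually_ge_atTop _)
    filter_upwards [hev] with I hI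
    exact norm_densityMean_sub_le (ξ I) (hξ I) ht.1 (by positivity)
      (hξt I _ (Finset.singleton_subset_iff.mp hI.1)) f g hf hg hg0

/-! ### From an invariant mean to almost invariant vectors -/

open Classical in
/-- The family of `ℓ¹`-functions `y ↦ δₓ (t i y) - δₓ y` on `A i`, extended by zero, written
through an inverse `s i : B i → A i` of the partial bijection `t i`. Its linear extension to finitely
supported `p` is described by `linearCombination_displacement_apply`. -/
noncomputable def displacement {X : Type*} {m : ℕ} (s : Fin m → X → X) (A B : Fin m → Set X)
    (x : X) (i : Fin m) : lp (fun _ : X => ℝ) 1 :=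
  (if x ∈ B i then lp.single 1 (s i x) 1 else 0) - (if x ∈ A i then lp.single 1 x 1 else 0)

lemma linearCombination_displacement_apply {X : Type*} {m : ℕ} {t s : Fin m → X → X}
    {A B : Fin m → Set X} (ht : ∀ i, Set.BijOn (t i) (A i) (B i))
    (hs : ∀ i, Set.InvOn (s i) (t i) (A i) (B i)) (p : X →₀ ℝ) (i : Fin m) {y : X}
    (hy : y ∈ A i) :
    Finsupp.linearCombination ℝ (displacement s A B) p i y = p (t i y) - p y := by
  classical
  induction p using Finsupp.induction_linear with
  | zero => simp
  | add p q hp hq =>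
    rw [map_add, Pi.add_apply, lp.coeFn_add, Pi.add_apply, hp, hq, Finsupp.add_apply,
      Finsupp.add_apply]
    ring
  | single x c =>
    rw [Finsupp.linearCombination_single, Pi.smul_apply, lp.coeFn_smul, Pi.smul_apply,
      displacement, lp.coeFn_sub, Pi.sub_apply, smul_sub, Finsupp.single_apply,
      Finsupp.single_apply]
    congr 1
    · by_cases hx : x = t i y
      · have hB : x ∈ B i := hx ▸ (ht i).mapsTo hy
        have h2 : s i x = y := hx ▸ (hs i).1 hy
        rw [if_pos hB, if_pos hx, h2, lp.single_apply_self, smul_eq_mul, mul_one]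
      · rw [if_neg hx]
        split_ifs with hB
        · rw [lp.single_apply_ne, smul_zero]
          rintro rfl
          exact hx ((hs i).2 hB).symm
        · simp
    · by_cases hx : x = y
      · subst hx
        rw [if_pos hy, if_pos rfl, lp.single_apply_self, smul_eq_mul, mul_one]
      · rw [if_neg hx]
        split_ifs with hA
        · rw [lp.single_apply_ne _ _ _ (Ne.symm hx), smul_zero]
        · simp

/-- Day's convexity argument: an invariant mean forbids separating `0` from the displacements of
the finitely supported probability densities, so some such density has small displacement. -/
lemma exists_almost_invariant_finsupp {X : Type*} [EMetricSpace X]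
    (φ : lp (fun _ : X => ℂ) ∞ →ₗ[ℂ] ℂ)
    (h1 : ∀ f : lp (fun _ : X => ℂ) ∞, (∀ x, f x = 1) → φ f = 1)
    (hpos : ∀ f : lp (fun _ : X => ℂ) ∞,
        (∀ x, ∃ r : ℝ, 0 ≤ r ∧ f x = r) → ∃ r : ℝ, 0 ≤ r ∧ φ f = r)
    (hinv : ∀ (t : X → X) (A B : Set X), IsPartialTranslation t A B →
        ∀ f g : lp (fun _ : X => ℂ) ∞,
          (∀ x ∉ B, f x = 0) → (∀ x ∈ A, g x = f (t x)) → (∀ x ∉ A, g x = 0) →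
          φ f = φ g)
    {m : ℕ} {t s : Fin m → X → X} {A B : Fin m → Set X}
    (ht : ∀ i, IsPartialTranslation (t i) (A i) (B i))
    (hs : ∀ i, Set.InvOn (s i) (t i) (A i) (B i)) {ε : ℝ} (hε : 0 < ε) :
    ∃ p : X →₀ ℝ, (∀ x, 0 ≤ p x) ∧ (p.sum fun _ c => c) = 1 ∧
      ‖Finsupp.linearCombination ℝ (displacement s A B) p‖ < ε := by
  classical
  set T := Finsupp.linearCombination ℝ (displacement s A B) with hT
  let P : Set (X →₀ ℝ) := {p | (∀ x, 0 ≤ p x) ∧ (p.sum fun _ c => c) = 1}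
  have hP : Convex ℝ P := by
    rintro p ⟨hp, hp1⟩ q ⟨hq, hq1⟩ a b ha hb hab
    refine ⟨fun x => ?_, ?_⟩
    · have := mul_nonneg ha (hp x)
      have := mul_nonneg hb (hq x)
      simp only [Finsupp.add_apply, Finsupp.smul_apply, smul_eq_mul]
      positivity
    · rw [Finsupp.sum_add_index' (fun _ => rfl) (fun _ _ _ => rfl),
        Finsupp.sum_smul_index (fun _ => rfl), Finsupp.sum_smul_index (fun _ => rfl),
        ← Finsupp.mul_sum, ← Finsupp.mul_sum, hp1, hq1, mul_one, mul_one, hab]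
  have h0 : (0 : Fin m → lp (fun _ : X => ℝ) 1) ∈ closure (T '' P) := by
    by_contra h0
    obtain ⟨L, u, hu0, hu⟩ := geometric_hahn_banach_point_closed
      (hP.linear_image T).closure isClosed_closure h0
    rw [map_zero] at hu0
    have hu' : ∀ x, u < L (displacement s A B x) := fun x => by
      refine hu _ (subset_closure ⟨Finsupp.single x 1, ⟨fun y => ?_, by simp⟩, by simp [hT]⟩)
      rw [Finsupp.single_apply]
      positivity
    -- `h i ∈ ℓ∞(X)` is the `i`-th component of `L`, read off on point masses.
    let h : Fin m → X → ℝ := fun i y => L (Pi.single i (lp.single 1 y 1))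
    have hb : ∀ i y, ‖h i y‖ ≤ ‖L‖ := fun i y => by
      refine (L.le_opNorm _).trans ?_
      rw [Pi.norm_single, lp.norm_single (by norm_num)]
      simp
    -- `f i` and `g i` are `h i` transported to `B i` by `t i`, and `h i` restricted to `A i`.
    have mem : ∀ F : X → ℂ, (∀ x, ‖F x‖ ≤ ‖L‖) → Memℓp F ∞ := fun F hF =>
      memℓp_infty ⟨‖L‖, by rintro _ ⟨x, rfl⟩; exact hF x⟩
    have mf : ∀ i, Memℓp (fun x => if x ∈ B i then (h i (s i x) : ℂ) else 0) ∞ := fun i =>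
      mem _ fun x => by
        split_ifs
        · rw [Complex.norm_real]; exact hb _ _
        · simp
    have mg : ∀ i, Memℓp (fun x => if x ∈ A i then (h i x : ℂ) else 0) ∞ := fun i =>
      mem _ fun x => by
        split_ifs
        · rw [Complex.norm_real]; exact hb _ _
        · simp
    let f : Fin m → lp (fun _ : X => ℂ) ∞ := fun i => ⟨_, mf i⟩
    let g : Fin m → lp (fun _ : X => ℂ) ∞ := fun i => ⟨_, mg i⟩
    have hf : ∀ i x, f i x = if x ∈ B i then (h i (s i x) : ℂ) else 0 := fun _ _ => rfl
    have hg : ∀ i x, g i x = if x ∈ A i then (h i x : ℂ) else 0 := fun _ _ => rfl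
    have hfg : ∀ i, φ (f i) = φ (g i) := fun i => by
      refine hinv (t i) (A i) (B i) (ht i) _ _ (fun x hx => ?_) (fun x hx => ?_) fun x hx => ?_
      · rw [hf, if_neg hx]
      · rw [hf, hg, if_pos hx, if_pos ((ht i).1.mapsTo hx), (hs i).1 hx]
      · rw [hg, if_neg hx]
    have hLx : ∀ x, ((L (displacement s A B x) : ℝ) : ℂ) = ∑ i, (f i x - g i x) := fun x => by
      rw [← Finset.univ_sum_single (displacement s A B x), map_sum, Complex.ofReal_sum]
      refine Finset.sum_congr rfl fun i _ => ?_
      rw [displacement, Pi.single_sub, map_sub, Complex.ofReal_sub, hf, hg]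
      congr 1
      · split_ifs <;> simp [h]
      · split_ifs <;> simp [h]
    let e : lp (fun _ : X => ℂ) ∞ :=
      ⟨fun _ => 1, memℓp_infty ⟨1, by rintro _ ⟨x, rfl⟩; simp⟩⟩
    have he : ∀ x, e x = 1 := fun _ => rfl
    obtain ⟨r, hr, hφ⟩ := hpos (∑ i, (f i - g i) - (u : ℂ) • e) fun x => by
      refine ⟨L (displacement s A B x) - u, sub_nonneg.2 (hu' x).le, ?_⟩
      rw [Complex.ofReal_sub, hLx, lp.coeFn_sub, Pi.sub_apply, lp.coeFn_sum, Finset.sum_apply,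
        lp.coeFn_smul, Pi.smul_apply, he, smul_eq_mul, mul_one]
      rfl
    rw [map_sub, map_sum, map_smul, h1 e he, smul_eq_mul, mul_one,
      Finset.sum_eq_zero fun i _ => by rw [map_sub, hfg, sub_self], zero_sub,
      ← Complex.ofReal_neg, Complex.ofReal_inj] at hφ
    linarith
  obtain ⟨_, ⟨p, hp, rfl⟩, hd⟩ := Metric.mem_closure_iff.1 h0 ε hε
  exact ⟨p, hp.1, hp.2, by simpa using hd⟩

lemma sq_sqrt_sub_sqrt_le {a b : ℝ} (ha : 0 ≤ a) (hb : 0 ≤ b) :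
    (√a - √b) ^ 2 ≤ |a - b| := by
  have h : |a - b| = |√a - √b| * (√a + √b) := by
    conv_lhs => rw [← Real.sq_sqrt ha, ← Real.sq_sqrt hb, sq_sub_sq, abs_mul, mul_comm,
      abs_of_nonneg (add_nonneg (Real.sqrt_nonneg a) (Real.sqrt_nonneg b))]
  rw [h, ← sq_abs, sq]
  gcongr
  rw [abs_le]
  constructor <;> linarith [Real.sqrt_nonneg a, Real.sqrt_nonneg b]

lemma exists_almost_invariant {X : Type*} [EMetricSpace X]
    (φ : lp (fun _ : X => ℂ) ∞ →ₗ[ℂ] ℂ)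
    (h1 : ∀ f : lp (fun _ : X => ℂ) ∞, (∀ x, f x = 1) → φ f = 1)
    (hpos : ∀ f : lp (fun _ : X => ℂ) ∞,
        (∀ x, ∃ r : ℝ, 0 ≤ r ∧ f x = r) → ∃ r : ℝ, 0 ≤ r ∧ φ f = r)
    (hinv : ∀ (t : X → X) (A B : Set X), IsPartialTranslation t A B →
        ∀ f g : lp (fun _ : X => ℂ) ∞,
          (∀ x ∉ B, f x = 0) → (∀ x ∈ A, g x = f (t x)) → (∀ x ∉ A, g x = 0) →
          φ f = φ g)
    {ε : ℝ} (hε : 0 < ε) {m : ℕ} {t : Fin m → X → X} {A B : Fin m → Set X}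
    (ht : ∀ i, IsPartialTranslation (t i) (A i) (B i)) :
    ∃ ξ : lp (fun _ : X => ℂ) 2, ‖ξ‖ = 1 ∧
      ∀ i, (∑' x : (A i), ‖ξ (t i x) - ξ (x : X)‖ ^ 2) < ε := by
  classical
  -- `Function.invFunOn` needs a point of `X`; if `X` were empty, then `0 = 1` in `ℓ∞(X)`.
  have hne : Nonempty X := by
    by_contra hX
    rw [not_nonempty_iff] at hX
    have := h1 0 fun x => hX.elim x
    simp at this
  obtain ⟨p, hp, hp1, hpε⟩ := exists_almost_invariant_finsupp φ h1 hpos hinv ht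
    (fun i => (ht i).1.invOn_invFunOn) hε
  have hfin : (Function.support fun x => ((√(p x) : ℝ) : ℂ)).Finite := by
    refine p.hasFiniteSupport.subset fun x hx h0 => hx ?_
    simp [h0]
  have hmem : Memℓp (fun x => ((√(p x) : ℝ) : ℂ)) 2 :=
    (memℓp_zero hfin).of_exponent_ge zero_le
  let ξ : lp (fun _ : X => ℂ) 2 := ⟨_, hmem⟩
  have hξ : ∀ x, ξ x = ((√(p x) : ℝ) : ℂ) := fun _ => rfl
  have hsq : ∀ x, ‖ξ x‖ ^ 2 = p x := fun x => by
    rw [hξ, Complex.norm_real, Real.norm_eq_abs, sq_abs, Real.sq_sqrt (hp x)]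
  refine ⟨ξ, ?_, fun i => ?_⟩
  · have h2 := hasSum_normSq ξ
    simp only [hsq] at h2
    have h3 : HasSum p (p.sum fun _ c => c) :=
      hasSum_sum_of_ne_finset_zero fun x hx => Finsupp.notMem_support_iff.1 hx
    have h4 := h2.unique h3
    rw [hp1] at h4
    exact (pow_eq_one_iff_of_nonneg (norm_nonneg _) two_ne_zero).1 h4
  · set v := Finsupp.linearCombination ℝ
      (displacement (fun i => Function.invFunOn (t i) (A i)) A B) p
    have hv : HasSum (fun x => ‖v i x‖) ‖v i‖ := by
      simpa using lp.hasSum_norm (p := 1) (by norm_num) (v i)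
    have hvA : Summable fun x : A i => ‖v i x‖ :=
      hv.summable.comp_injective Subtype.val_injective
    have hle : ∀ x : A i, ‖ξ (t i x) - ξ (x : X)‖ ^ 2 ≤ ‖v i x‖ := fun x => by
      rw [linearCombination_displacement_apply (fun i => (ht i).1)
        (fun i => (ht i).1.invOn_invFunOn) p i x.2, hξ, hξ, ← Complex.ofReal_sub,
        Complex.norm_real, Real.norm_eq_abs, sq_abs]
      exact sq_sqrt_sub_sqrt_le (hp _) (hp _)
    calc ∑' x : A i, ‖ξ (t i x) - ξ (x : X)‖ ^ 2
        ≤ ∑' x : A i, ‖v i x‖ :=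
          (Summable.of_nonneg_of_le (fun _ => sq_nonneg _) hle hvA).tsum_le_tsum hle hvA
      _ ≤ ∑' x, ‖v i x‖ := Summable.tsum_le_tsum_of_inj (fun x : A i => (x : X))
          Subtype.val_injective (fun _ _ => norm_nonneg _) (fun _ => le_rfl) hvA hv.summable
      _ = ‖v i‖ := hv.tsum_eq
      _ ≤ ‖v‖ := norm_le_pi_norm v i
      _ < ε := hpε

/-- For an extended metric space `X` with bounded geometry, the
existence of an invariant mean on `ℓ∞(X; ℂ)` is equivalent to the existence of almost
invariant unit vectors in `ℓ²(X; ℂ)` for every finite family of partial translations. -/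
theorem stmt_8 {X : Type*} [EMetricSpace X]
    (hbg : ∀ r : ℝ≥0∞, r < ⊤ → ∃ M : ℕ, ∀ x : X,
      ({y | edist x y ≤ r}).Finite ∧ ({y | edist x y ≤ r}).ncard ≤ M) :
    (∃ φ : lp (fun _ : X => ℂ) ∞ →ₗ[ℂ] ℂ,
      (∀ f : lp (fun _ : X => ℂ) ∞, (∀ x, f x = 1) → φ f = 1) ∧
      (∀ f : lp (fun _ : X => ℂ) ∞,
        (∀ x, ∃ r : ℝ, 0 ≤ r ∧ f x = r) → ∃ r : ℝ, 0 ≤ r ∧ φ f = r) ∧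
      (∀ (t : X → X) (A B : Set X), IsPartialTranslation t A B →
        ∀ f g : lp (fun _ : X => ℂ) ∞,
          (∀ x ∉ B, f x = 0) → (∀ x ∈ A, g x = f (t x)) → (∀ x ∉ A, g x = 0) →
          φ f = φ g)) ↔
    (∀ ε : ℝ, 0 < ε → ∀ (m : ℕ) (t : Fin m → X → X) (A B : Fin m → Set X),
      (∀ i, IsPartialTranslation (t i) (A i) (B i)) →
      ∃ ξ : lp (fun _ : X => ℂ) 2, ‖ξ‖ = 1 ∧
        ∀ i, (∑' x : (A i), ‖ξ (t i x) - ξ (x : X)‖ ^ 2) < ε) := by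
  constructor
  · rintro ⟨φ, h1, hpos, hinv⟩ ε hε m t A B ht
    exact exists_almost_invariant φ h1 hpos hinv hε ht
  · exact exists_mean
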